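/- arXiv:1907.05965 — 2 statements merged into one kernel-verified Lean document; each statement's English description precedes it below -/
import Mathlib

section
/- Let m, n, S ≥ 1. For Lebesgue-almost every pair (P, Q) ∈ ℝ^{S×m} × ℝ^{S×n}, every square submatrix of the row-wise Khatri-Rao product F = P ⊙ Q is invertible; that is, for every s ≥ 1, every row-index set R ⊆ [S] with |R| = s, and every column-index set C ⊆ [m]×[n] with |C| = s, the submatrix [F]_{R,C} is invertible. -/
open MeasureTheory

/-- The row-wise Khatri-Rao product of `P : ℝ^{S×m}` and `Q : ℝ^{S×n}`. -/
def rowKhatriRao {S m n : Type*} (P : Matrix S m ℝ) (Q : Matrix S n ℝ) :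
    Matrix S (m × n) ℝ :=
  fun i jl => P i jl.1 * Q i jl.2

/-! A minor of `P ⊙ Q` is a polynomial, hence analytic, function of `(P, Q)`, so it is almost
everywhere nonzero as soon as it is nonzero once. It equals `1` when, for each selected row with
corresponding column `(j, l)`, that row of `P` is `e_j` and that row of `Q` is `e_l`. -/

instance isAddHaarMeasure_volume_pi_pi {ι κ : Type*} [Fintype ι] [Fintype κ] :
    (volume : Measure (ι → κ → ℝ)).IsAddHaarMeasure :=
  Measure.pi.isAddHaarMeasure fun _ => volume

section AnalyticFunctions

open AffineMap (homothety lineMap)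

variable {E F : Type*} [NormedAddCommGroup E] [NormedSpace ℝ E]
  [NormedAddCommGroup F] [NormedSpace ℝ F] {f : E → F} {x₀ : E}

lemma ae_comp_lineMap_ne_zero_of_analyticOnNhd (hf : AnalyticOnNhd ℝ f Set.univ) (hx₀ : f x₀ ≠ 0)
    (x : E) : ∀ᵐ t : ℝ, f (lineMap x₀ x t) ≠ 0 := by
  have hline : AnalyticOnNhd ℝ (lineMap x₀ x : ℝ → E) Set.univ := by
    simp only [AffineMap.coe_lineMap, vsub_eq_sub, vadd_eq_add]
    exact fun t _ => by fun_prop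
  have hcodiscrete := (hf.comp hline (Set.mapsTo_univ _ _)).preimage_zero_mem_codiscrete
    (x := 0) (by simpa using hx₀)
  rw [← Measure.restrict_univ (μ := volume)]
  exact ae_restrict_le_codiscreteWithin .univ hcodiscrete

variable [FiniteDimensional ℝ E] [MeasurableSpace E] [BorelSpace E]

lemma ae_of_ae_homothety {μ : Measure E} [μ.IsAddHaarMeasure] {p : E → Prop} {t : ℝ} (ht : t ≠ 0)
    (h : ∀ᵐ x ∂μ, p (homothety x₀ t x)) : ∀ᵐ x ∂μ, p x := by
  have hsurj : Function.Surjective (homothety x₀ t) := fun y =>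
    ⟨homothety x₀ t⁻¹ y, by rw [← AffineMap.homothety_mul_apply, mul_inv_cancel₀ ht]; simp⟩
  rw [ae_iff] at h ⊢
  rw [← Set.image_preimage_eq {x | ¬p x} hsurj, Measure.addHaar_image_homothety]
  exact mul_eq_zero_of_right _ h

theorem ae_ne_zero_of_analyticOnNhd (μ : Measure E) [μ.IsAddHaarMeasure]
    (hf : AnalyticOnNhd ℝ f Set.univ) (hx₀ : f x₀ ≠ 0) : ∀ᵐ x ∂μ, f x ≠ 0 := by
  have hcont : Continuous fun z : E × ℝ => f (lineMap x₀ z.1 z.2) := by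
    have := continuousOn_univ.1 hf.continuousOn
    simp only [AffineMap.lineMap_apply_module]
    fun_prop
  have hmeas : MeasurableSet {z : E × ℝ | f (lineMap x₀ z.1 z.2) ≠ 0} :=
    (isClosed_singleton.preimage hcont).isOpen_compl.measurableSet
  -- Fubini is applied to lines through `x₀`, since a line elsewhere may lie in the zero set of `f`.
  have hae : ∀ᵐ t : ℝ, ∀ᵐ x ∂μ, f (lineMap x₀ x t) ≠ 0 :=
    (Measure.ae_ae_comm hmeas).1 (.of_forall (ae_comp_lineMap_ne_zero_of_analyticOnNhd hf hx₀))
  obtain ⟨t, ht, ht₀⟩ := (hae.and (Measure.ae_ne volume 0)).exists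
  exact ae_of_ae_homothety ht₀ (by simpa only [AffineMap.homothety_eq_lineMap] using ht)

end AnalyticFunctions

lemma analyticOnNhd_matrix_det {𝕜 E A ι : Type*} [NontriviallyNormedField 𝕜]
    [NormedAddCommGroup E] [NormedSpace 𝕜 E] [NormedCommRing A] [NormedAlgebra 𝕜 A]
    [Fintype ι] [DecidableEq ι] {M : E → Matrix ι ι A} {s : Set E}
    (hM : ∀ i j, AnalyticOnNhd 𝕜 (fun x => M x i j) s) :
    AnalyticOnNhd 𝕜 (fun x => (M x).det) s := by
  simp only [Matrix.det_apply, Units.smul_def, zsmul_eq_mul]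
  exact Finset.analyticOnNhd_fun_sum _ fun σ _ =>
    analyticOnNhd_const.mul (Finset.analyticOnNhd_fun_prod _ fun i _ => hM _ _)

section RowKhatriRao

variable {S m n κ : Type*} {r : κ → S} {c : κ → m × n}

lemma exists_rowKhatriRao_submatrix_eq_one [DecidableEq κ] (hr : r.Injective) (hc : c.Injective) :
    ∃ (P : Matrix S m ℝ) (Q : Matrix S n ℝ), (rowKhatriRao P Q).submatrix r c = 1 := by
  classical
  refine ⟨Function.extend r (fun k => Pi.single (c k).1 1) 0,
    Function.extend r (fun k => Pi.single (c k).2 1) 0, ?_⟩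
  ext k k'
  simp [rowKhatriRao, hr.extend_apply, Pi.single_apply, Matrix.one_apply, ← ite_and,
    and_comm, ← Prod.ext_iff, hc.eq_iff, eq_comm]

lemma analyticOnNhd_det_rowKhatriRao_submatrix [Fintype S] [Fintype m] [Fintype n] [Fintype κ]
    [DecidableEq κ] :
    AnalyticOnNhd ℝ (fun pq : (S → m → ℝ) × (S → n → ℝ) =>
      ((rowKhatriRao (Matrix.of pq.1) (Matrix.of pq.2)).submatrix r c).det) Set.univ := by
  refine analyticOnNhd_matrix_det fun i j => ?_
  simp only [rowKhatriRao, Matrix.submatrix_apply, Matrix.of_apply]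
  exact contDiff_omega_iff_analyticOnNhd.1 (by fun_prop)

variable [Finite S] [Finite m] [Finite n] (μ : Measure ((S → m → ℝ) × (S → n → ℝ)))
  [μ.IsAddHaarMeasure]

theorem ae_isUnit_rowKhatriRao_submatrix [Fintype κ] [DecidableEq κ]
    (hr : r.Injective) (hc : c.Injective) :
    ∀ᵐ pq ∂μ, IsUnit ((rowKhatriRao (Matrix.of pq.1) (Matrix.of pq.2)).submatrix r c) := by
  have := Fintype.ofFinite S
  have := Fintype.ofFinite m
  have := Fintype.ofFinite n
  obtain ⟨P, Q, hPQ⟩ := exists_rowKhatriRao_submatrix_eq_one hr hc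
  simp only [Matrix.isUnit_iff_isUnit_det, isUnit_iff_ne_zero]
  refine ae_ne_zero_of_analyticOnNhd (x₀ := (Matrix.of.symm P, Matrix.of.symm Q)) μ
    analyticOnNhd_det_rowKhatriRao_submatrix ?_
  simp [hPQ]

theorem rowKhatriRao_ae_all_square_submatrices_invertible_general :
    ∀ᵐ pq ∂μ, ∀ (s : ℕ) (r : Fin s → S), r.Injective → ∀ c : Fin s → m × n, c.Injective →
      IsUnit ((rowKhatriRao (Matrix.of pq.1) (Matrix.of pq.2)).submatrix r c) := by
  simp only [ae_all_iff, Filter.eventually_imp_distrib_left]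
  exact fun s r hr c hc => ae_isUnit_rowKhatriRao_submatrix μ hr hc

end RowKhatriRao

/-- For Lebesgue-almost every `(P, Q)`, every square submatrix of the row-wise
Khatri-Rao product `F = P ⊙ Q` is invertible: for every `s ≥ 1`, every
selection of `s` rows (an injection `r : Fin s ↪ Fin S`) and `s` columns (an
injection `c : Fin s ↪ Fin m × Fin n`), the submatrix `[F]_{R,C}` is
invertible. -/
theorem rowKhatriRao_ae_all_square_submatrices_invertible
    (m n S : ℕ) (hm : 1 ≤ m) (hn : 1 ≤ n) (hS : 1 ≤ S) :
    ∀ᵐ pq : (Fin S → Fin m → ℝ) × (Fin S → Fin n → ℝ) ∂volume,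
      ∀ s : ℕ, 1 ≤ s →
        ∀ r : Fin s → Fin S, Function.Injective r →
          ∀ c : Fin s → Fin m × Fin n, Function.Injective c →
            IsUnit
              ((rowKhatriRao (Matrix.of pq.1) (Matrix.of pq.2)).submatrix r c) := by
  have := Measure.prod.instIsAddHaarMeasure (volume : Measure (Fin S → Fin m → ℝ))
    (volume : Measure (Fin S → Fin n → ℝ))
  exact (rowKhatriRao_ae_all_square_submatrices_invertible_general (S := Fin S) (m := Fin m)
    (n := Fin n) (.prod volume volume)).mono fun _ h s _ => h s
end

section
/- Let m, n, S ≥ 1, set K = mn and N = K + S, and let μ be a probability measure on ℝ that is absolutely continuous with respect to Lebesgue measure. Let the S·m + S·n entries of the random matrices P ∈ ℝ^{S×m} and Q ∈ ℝ^{S×n} be i.i.d. with common law μ, and let G be the N×K matrix whose first K rows form the identity matrix I_K and whose last S rows form the row-wise Khatri-Rao product F = P ⊙ Q. Then with probability 1, every K×K submatrix of G formed by selecting any K of its N rows is invertible. -/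
open MeasureTheory

/-- The systematic RKRP generator matrix: the `K × K` identity (rows indexed
by `Fin m × Fin n`, `K = mn`) stacked on top of `F = P ⊙ Q`, giving an
`N × K` matrix with `N = K + S` rows. -/
def systematicRKRP {S : Type*} {m n : ℕ}
    (P : Matrix S (Fin m) ℝ) (Q : Matrix S (Fin n) ℝ) :
    Matrix ((Fin m × Fin n) ⊕ S) (Fin m × Fin n) ℝ :=
  Matrix.fromRows (1 : Matrix (Fin m × Fin n) (Fin m × Fin n) ℝ)
    (rowKhatriRao P Q)

/-!
The determinant of a fixed selection of `K` rows of `[I_K ; P ⊙ Q]` is a polynomial in the entries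
of `P` and `Q`. By Fubini and induction on the number of variables, the zero set of a nonzero
polynomial is null for every product of σ-finite measures without point masses, so it is enough to
find one choice of `P` and `Q` with nonzero determinant. Rows of `P ⊙ Q` can be prescribed to be
arbitrary standard basis vectors, since `e_(j,l) = e_j ⊗ e_l`, and these can be chosen to complete
the selected rows of `I_K` to a permutation matrix.
-/

section NullZeroSet

variable {R : Type*} [MeasurableSpace R]

theorem measurable_mvPolynomial_eval {σ : Type*} [CommSemiring R] [MeasurableAdd₂ R]
    [MeasurableMul₂ R] (p : MvPolynomial σ R) :
    Measurable fun x : σ → R => MvPolynomial.eval x p := by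
  simp only [MvPolynomial.eval_eq]
  fun_prop

variable [CommRing R] [IsDomain R]

theorem ae_polynomial_eval_ne_zero (μ : Measure R) [NullSingletonClass μ] {p : Polynomial R}
    (hp : p ≠ 0) : ∀ᵐ a ∂μ, p.eval a ≠ 0 :=
  measure_eq_zero_iff_ae_notMem.1 ((Polynomial.finite_setOfPred_isRoot hp).measure_zero μ)

variable [MeasurableSingletonClass R] [MeasurableAdd₂ R] [MeasurableMul₂ R]

theorem ae_mvPolynomial_fin_eval_ne_zero {n : ℕ} (μ : Fin n → Measure R) [∀ i, SigmaFinite (μ i)]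
    [∀ i, NullSingletonClass (μ i)] {p : MvPolynomial (Fin n) R} (hp : p ≠ 0) :
    ∀ᵐ x ∂Measure.pi μ, MvPolynomial.eval x p ≠ 0 := by
  induction n with
  | zero =>
    refine .of_forall fun x => ?_
    rw [MvPolynomial.eq_C_of_isEmpty p] at hp ⊢
    simpa using hp
  | succ n ih =>
    let q := MvPolynomial.finSuccEquiv R n p
    have hq : q.leadingCoeff ≠ 0 := by simpa [q] using hp
    let e := (MeasurableEquiv.piFinSuccAbove (fun _ : Fin (n + 1) => R) 0).symm
    have eval_e (a : R) (y : Fin n → R) :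
        MvPolynomial.eval (e (a, y)) p = (q.map (MvPolynomial.eval y)).eval a := by
      rw [← MvPolynomial.eval_eq_eval_mv_eval', MeasurableEquiv.piFinSuccAbove_symm_apply,
        Fin.insertNthEquiv_zero]
      rfl
    have measurableSet_ne : MeasurableSet {z | MvPolynomial.eval (e z) p ≠ 0} :=
      ((measurable_mvPolynomial_eval p).comp e.measurable) (measurableSet_singleton 0).compl
    rw [← (measurePreserving_piFinSuccAbove μ 0).symm.map_eq, e.measurableEmbedding.ae_map_iff,
      Measure.ae_prod_iff_ae_ae measurableSet_ne, Measure.ae_ae_comm measurableSet_ne]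
    filter_upwards [ih (fun i => μ (Fin.succAbove 0 i)) hq] with y hy
    simp only [eval_e]
    refine ae_polynomial_eval_ne_zero (μ 0) fun hmap => hy ?_
    rw [Polynomial.leadingCoeff, ← Polynomial.coeff_map, hmap, Polynomial.coeff_zero]

variable {σ : Type*} [Fintype σ] (μ : σ → Measure R) [∀ i, SigmaFinite (μ i)]
  [∀ i, NullSingletonClass (μ i)]

theorem ae_mvPolynomial_eval_ne_zero {p : MvPolynomial σ R} (hp : p ≠ 0) :
    ∀ᵐ x ∂Measure.pi μ, MvPolynomial.eval x p ≠ 0 := by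
  let e := (Fintype.equivFin σ).symm
  have hq : MvPolynomial.rename e.symm p ≠ 0 := by
    rwa [Ne, map_eq_zero_iff _ (MvPolynomial.rename_injective _ e.symm.injective)]
  rw [← (measurePreserving_piCongrLeft μ e).map_eq,
    (MeasurableEquiv.measurableEmbedding _).ae_map_iff]
  filter_upwards [ae_mvPolynomial_fin_eval_ne_zero (fun i => μ (e i)) hq] with x hx
  rw [MvPolynomial.eval_rename] at hx
  convert hx using 3
  funext i
  obtain ⟨j, rfl⟩ := e.surjective i
  rw [MeasurableEquiv.piCongrLeft_apply_apply, Function.comp_apply, e.symm_apply_apply]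

theorem ae_det_map_mvPolynomial_eval_ne_zero {κ : Type*} [Fintype κ] [DecidableEq κ]
    {A : Matrix κ κ (MvPolynomial σ R)} {x₀ : σ → R}
    (hx₀ : (A.map (MvPolynomial.eval x₀)).det ≠ 0) :
    ∀ᵐ x ∂Measure.pi μ, (A.map (MvPolynomial.eval x)).det ≠ 0 := by
  have eval_det (x : σ → R) :
      (A.map (MvPolynomial.eval x)).det = MvPolynomial.eval x A.det :=
    ((MvPolynomial.eval x).map_det A).symm
  simp only [eval_det] at hx₀ ⊢
  refine ae_mvPolynomial_eval_ne_zero μ fun hdet => hx₀ ?_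
  rw [hdet, map_zero]

end NullZeroSet

theorem exists_bijective_sumElim_id_comp {κ α β : Type*} [Nonempty α] [Finite α] (c : κ ≃ α)
    {r : κ → α ⊕ β} (hr : r.Injective) :
    ∃ g : β → α, Function.Bijective (Sum.elim id g ∘ r) := by
  classical
  have := Fintype.ofFinite α
  have := Fintype.ofEquiv α c.symm
  let a₀ := Classical.arbitrary α
  have injOn_inl : Set.InjOn (Sum.elim id (fun _ => a₀) ∘ r) {k | (r k).isLeft} := by
    intro k hk l hl hkl
    obtain ⟨a, ha⟩ := Sum.isLeft_iff.1 hk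
    obtain ⟨b, hb⟩ := Sum.isLeft_iff.1 hl
    exact hr (by simpa [ha, hb] using hkl)
  obtain ⟨e, he⟩ := Set.MapsTo.exists_equiv_extend_of_card_eq (t := Finset.univ)
    (by simpa using Fintype.card_congr c) (fun _ _ => by simp) injOn_inl
  let e' : κ ≃ α := e.trans (Equiv.subtypeUnivEquiv Finset.mem_univ)
  refine ⟨fun i => Function.extend r e' (fun _ => a₀) (Sum.inr i), ?_⟩
  convert e'.bijective using 1
  funext k
  rcases h : r k with a | i
  · simpa [h, e'] using (he k (by simp [h])).symm
  · rw [Function.comp_apply, h, Sum.elim_inr, ← h, hr.extend_apply]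

section SystematicRKRP

variable {S : Type*} {m n : ℕ}

theorem systematicRKRP_single (g : S → Fin m × Fin n) :
    systematicRKRP (Matrix.of fun i => Pi.single (g i).1 1)
      (Matrix.of fun i => Pi.single (g i).2 1) =
      (1 : Matrix (Fin m × Fin n) (Fin m × Fin n) ℝ).submatrix (Sum.elim id g) id := by
  ext (a | i) ⟨j, l⟩
  · rfl
  · simp [systematicRKRP, rowKhatriRao, Matrix.one_apply, Pi.single_apply, Prod.ext_iff,
      ← ite_and, eq_comm, and_comm]

theorem exists_isUnit_systematicRKRP_submatrix {κ : Type*} [Fintype κ] [DecidableEq κ]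
    (c : κ ≃ Fin m × Fin n) {r : κ → (Fin m × Fin n) ⊕ S} (hr : r.Injective) :
    ∃ (P : Matrix S (Fin m) ℝ) (Q : Matrix S (Fin n) ℝ),
      IsUnit ((systematicRKRP P Q).submatrix r c) := by
  cases isEmpty_or_nonempty κ
  · exact ⟨0, 0, isUnit_of_subsingleton _⟩
  have : Nonempty (Fin m × Fin n) := c.nonempty_congr.1 ‹_›
  obtain ⟨g, hg⟩ := exists_bijective_sumElim_id_comp c hr
  refine ⟨Matrix.of fun i => Pi.single (g i).1 1, Matrix.of fun i => Pi.single (g i).2 1, ?_⟩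
  rw [systematicRKRP_single]
  exact (Matrix.isUnit_submatrix_equiv (Equiv.ofBijective _ hg) c).2 isUnit_one

/-- The systematic RKRP generator matrix of two matrices `P`, `Q` of independent indeterminates:
`X (inl (i, j))` stands for `P i j` and `X (inr (i, l))` for `Q i l`. -/
noncomputable def genericSystematicRKRP (S : Type*) (m n : ℕ) :
    Matrix ((Fin m × Fin n) ⊕ S) (Fin m × Fin n)
      (MvPolynomial ((S × Fin m) ⊕ (S × Fin n)) ℝ) :=
  Matrix.fromRows 1 (Matrix.of fun i jl =>
    MvPolynomial.X (Sum.inl (i, jl.1)) * MvPolynomial.X (Sum.inr (i, jl.2)))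

theorem genericSystematicRKRP_map_eval (x : (S × Fin m) ⊕ (S × Fin n) → ℝ) :
    (genericSystematicRKRP S m n).map (MvPolynomial.eval x) =
      systematicRKRP (Matrix.of fun i j => x (Sum.inl (i, j)))
        (Matrix.of fun i l => x (Sum.inr (i, l))) := by
  ext (a | i) jl
  · simp [genericSystematicRKRP, systematicRKRP, Matrix.one_apply, apply_ite]
  · simp [genericSystematicRKRP, systematicRKRP, rowKhatriRao]

theorem systematic_RKRP_is_MDS_prob_general [Fintype S]
    (μ : (S × Fin m) ⊕ (S × Fin n) → Measure ℝ) [∀ i, SigmaFinite (μ i)]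
    [∀ i, NullSingletonClass (μ i)] {κ : Type*} [Fintype κ] [DecidableEq κ]
    (c : κ ≃ Fin m × Fin n) :
    ∀ᵐ x ∂Measure.pi μ, ∀ r : κ → (Fin m × Fin n) ⊕ S, Function.Injective r →
      IsUnit ((systematicRKRP (Matrix.of fun i j => x (Sum.inl (i, j)))
        (Matrix.of fun i l => x (Sum.inr (i, l)))).submatrix r c) := by
  simp only [ae_all_iff, Matrix.isUnit_iff_isUnit_det, isUnit_iff_ne_zero]
  intro r hr
  obtain ⟨P, Q, hPQ⟩ := exists_isUnit_systematicRKRP_submatrix c hr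
  let x₀ : (S × Fin m) ⊕ (S × Fin n) → ℝ := Sum.elim (fun i => P i.1 i.2) (fun i => Q i.1 i.2)
  have map_eval_submatrix (x : (S × Fin m) ⊕ (S × Fin n) → ℝ) :
      ((genericSystematicRKRP S m n).submatrix r c).map (MvPolynomial.eval x) =
        (systematicRKRP (Matrix.of fun i j => x (Sum.inl (i, j)))
          (Matrix.of fun i l => x (Sum.inr (i, l)))).submatrix r c := by
    rw [← Matrix.submatrix_map, genericSystematicRKRP_map_eval]
  have det_ne_zero :
      (((genericSystematicRKRP S m n).submatrix r c).map (MvPolynomial.eval x₀)).det ≠ 0 := by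
    rw [map_eval_submatrix]
    exact ((Matrix.isUnit_iff_isUnit_det _).1 hPQ).ne_zero
  simpa only [map_eval_submatrix] using ae_det_map_mvPolynomial_eval_ne_zero μ det_ne_zero

end SystematicRKRP

/-- If the `Sm + Sn` entries of `P` and `Q` are i.i.d. with common law `μ`
absolutely continuous w.r.t. Lebesgue measure, then with probability 1 every
`K × K` submatrix of the systematic generator matrix `G = [I_K ; P ⊙ Q]`
formed by selecting any `K = mn` of its `N = K + S` rows is invertible. -/
theorem systematic_RKRP_is_MDS_prob (m n S : ℕ)
    (hm : 1 ≤ m) (hn : 1 ≤ n) (hS : 1 ≤ S)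
    (μ : Measure ℝ) [IsProbabilityMeasure μ] (hμ : μ ≪ volume) :
    ∀ᵐ x : ((Fin S × Fin m) ⊕ (Fin S × Fin n)) → ℝ ∂(Measure.pi fun _ => μ),
      ∀ r : Fin (m * n) → (Fin m × Fin n) ⊕ Fin S, Function.Injective r →
        IsUnit
          ((systematicRKRP
              (Matrix.of fun i j => x (Sum.inl (i, j)))
              (Matrix.of fun i l => x (Sum.inr (i, l)))).submatrix r
            (⇑finProdFinEquiv.symm)) := by
  have : NullSingletonClass μ := ⟨fun a => hμ (measure_singleton a)⟩
  exact systematic_RKRP_is_MDS_prob_general (fun _ => μ) finProdFinEquiv.symm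
end
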